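/- Let f ∈ ℚ_2[x] be a nonzero polynomial with σ_{ℚ_2}(f) ≤ 2. Then f has at most 35 distinct roots in ℚ_2. -/

import Mathlib

open Polynomial

/-- `f` admits a presentation of additive complexity `s` over `L`. -/
def HasAddComplexityPres {L : Type*} [Field L] (f : L[X]) (s : ℕ) : Prop :=
  ∃ (c d : ℕ → L) (m m' : ℕ → ℕ → ℕ) (Xs : ℕ → L[X]),
    Xs 0 = X ∧
    (∀ j, 1 ≤ j → j ≤ s →
      Xs j = C (c j) * ∏ i ∈ Finset.range j, Xs i ^ m i j
           + C (d j) * ∏ i ∈ Finset.range j, Xs i ^ m' i j) ∧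
    f = C (c (s+1)) * ∏ i ∈ Finset.range (s+1), Xs i ^ m i (s+1)

/-- The additive complexity `σ_L(f)`: the least `s` admitting such a presentation. -/
noncomputable def addComplexity {L : Type*} [Field L] (f : L[X]) : ℕ :=
  sInf {s | HasAddComplexityPres f s}

/-!
In a presentation of complexity two, a nonzero root of `f` is a root of `P = X₁ = c₁xᵐ + d₁xᵐ'` or
of `Q = X₂ = c xᵃPᵇ + d xᵃ'Pᵇ'`. Off the zeros of `P`, a root of `Q` is a point of the curve
`xᴬ yᴮ = γ`, `y = P(x)`, with `A = a - a'`, `B = b - b'`, `γ = -d / c`. For coprime `A`, `B` a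
Bézout relation parametrizes `xᴬ yᴮ = γ` by a single unit `t`, with `x` and `y` monomials in `t`,
so that `y = P(x)` becomes a trinomial equation in `t`; in general one first extracts a root of
order `gcd(A, B)` of `γ`. Hence bounds `r` and `N` for the number of nonzero roots of binomials and
trinomials give the bound `1 + r + r * N` for `f`.

Over `ℚ_2`, at a root of a polynomial two of its terms tie in absolute value, and each of the at
most `n(n + 1) / 2` pairs among `n + 1` terms determines the absolute value of the root. On a
sphere `‖t‖ = ‖s‖` every point is `±s(1 + 4z)` with `‖z‖ ≤ 1`. The Taylor coefficients of
`g(1 + 4z)` are `4ᵏ / k!` times the derivatives of `g` at `1`; when `g` has at most `n + 1` terms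
all its derivatives at `1` are integral combinations of the first `n + 1`, so for `n ≤ 2` the decay
of `4ᵏ / k!` and Strassmann's theorem leave at most `n` roots. This gives `r = 2`, `N = 12` and the
bound `27`.
-/

lemma encard_biUnion_le_mul {ι α : Type*} {t : Set ι} {s : ι → Set α} {m n : ℕ}
    (ht : t.encard ≤ m) (hs : ∀ i ∈ t, (s i).encard ≤ n) :
    (⋃ i ∈ t, s i).encard ≤ (m * n : ℕ) := by
  obtain ⟨t, rfl⟩ := (Set.finite_of_encard_le_coe ht).exists_finset_coe
  rw [Set.encard_coe_eq_coe_finsetCard, Nat.cast_le] at ht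
  calc (⋃ i ∈ t, s i).encard ≤ ∑ i ∈ t, (s i).encard := t.set_encard_biUnion_le s
    _ ≤ ∑ _i ∈ t, (n : ℕ∞) := Finset.sum_le_sum hs
    _ = (t.card * n : ℕ) := by rw [Finset.sum_const, nsmul_eq_mul, Nat.cast_mul]
    _ ≤ (m * n : ℕ) := by gcongr

section Strassmann

variable {K : Type*} [NormedField K] [IsUltrametricDist K]

lemma norm_coeff_lt_of_X_sub_C_mul {g : K[X]} {r : K} (hr : ‖r‖ ≤ 1) {n : ℕ} {ε : ℝ}
    (h : ∀ k > n, ‖((X - C r) * g).coeff k‖ < ε) : ∀ k ≥ n, ‖g.coeff k‖ < ε := by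
  have hε : 0 < ε := (norm_nonneg _).trans_lt (h (n + 1) n.lt_succ_self)
  suffices ∀ m k, n ≤ k → g.natDegree < k + m → ‖g.coeff k‖ < ε from
    fun k hk ↦ this (g.natDegree + 1) k hk (by omega)
  intro m
  induction m with
  | zero =>
    intro k _ hk
    rwa [coeff_eq_zero_of_natDegree_lt (add_zero k ▸ hk), norm_zero]
  | succ m ih =>
    intro k hnk hk
    have hcoeff : g.coeff k = ((X - C r) * g).coeff (k + 1) + r * g.coeff (k + 1) := by
      rw [coeff_X_sub_C_mul, sub_add_cancel]
    rw [hcoeff]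
    refine (IsUltrametricDist.norm_add_le_max _ _).trans_lt (max_lt (h _ (by omega)) ?_)
    rw [norm_mul]
    exact (mul_le_of_le_one_left (norm_nonneg _) hr).trans_lt (ih _ (by omega) (by omega))

lemma norm_coeff_X_sub_C_mul_lt {g : K[X]} {r : K} (hr : ‖r‖ ≤ 1) {ε : ℝ}
    (h : ∀ k, ‖g.coeff k‖ < ε) (k : ℕ) : ‖((X - C r) * g).coeff k‖ < ε := by
  have hmul (k : ℕ) : ‖r * g.coeff k‖ < ε := by
    rw [norm_mul]
    exact (mul_le_of_le_one_left (norm_nonneg _) hr).trans_lt (h k)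
  cases k with
  | zero => simpa using hmul 0
  | succ k =>
    rw [coeff_X_sub_C_mul, sub_eq_add_neg]
    exact (IsUltrametricDist.norm_add_le_max _ _).trans_lt
      (max_lt (h k) (by simpa only [norm_neg] using hmul (k + 1)))

lemma norm_coeff_lt_of_isRoot {S : Finset K} {f : K[X]} {ε : ℝ}
    (hS : ∀ r ∈ S, ‖r‖ ≤ 1 ∧ f.IsRoot r) (h : ∀ k ≥ S.card, ‖f.coeff k‖ < ε) (k : ℕ) :
    ‖f.coeff k‖ < ε := by
  induction S using Finset.cons_induction generalizing f k with
  | empty => exact h k (Nat.zero_le k)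
  | cons r S hrS ih =>
    obtain ⟨⟨hr, hroot⟩, hS⟩ := (Finset.forall_mem_cons hrS _).mp hS
    obtain ⟨g, rfl⟩ := dvd_iff_isRoot.mpr hroot
    rw [Finset.card_cons] at h
    refine norm_coeff_X_sub_C_mul_lt hr
      (fun k ↦ ih (fun s hs ↦ ⟨(hS s hs).1, ?_⟩) (norm_coeff_lt_of_X_sub_C_mul hr h) k) k
    have hsr : s ≠ r := ne_of_mem_of_not_mem hs hrS
    simpa [sub_eq_zero, hsr] using (hS s hs).2

theorem encard_roots_closedBall_le {f : K[X]} {n j : ℕ}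
    (h : ∀ k > n, ‖f.coeff k‖ < ‖f.coeff j‖) :
    {z : K | ‖z‖ ≤ 1 ∧ f.eval z = 0}.encard ≤ n := by
  by_contra! hlt
  obtain ⟨T, hT, hcard⟩ := Set.exists_subset_encard_eq (Order.add_one_le_of_lt hlt)
  obtain ⟨S, rfl⟩ := (Set.finite_of_encard_eq_coe (k := n + 1) hcard).exists_finset_coe
  have hcard : S.card = n + 1 := by exact_mod_cast hcard
  exact lt_irrefl _ (norm_coeff_lt_of_isRoot (S := S) hT (fun k hk ↦ h k (by omega)) j)

end Strassmann

section SparseDerivatives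

variable {R : Type*} [CommRing R]

/-- The functional `p ↦ ∑ e, gₑ p(e)` on integer polynomials; equivalently the value at `1` of
`p(θ) g`, where `θ` is the Euler operator `X d/dX`. -/
noncomputable def exponentMoment (g : R[X]) : ℤ[X] →ₗ[ℤ] R where
  toFun p := ∑ e ∈ g.support, g.coeff e * (p.eval (e : ℤ) : ℤ)
  map_add' p q := by simp [mul_add, Finset.sum_add_distrib]
  map_smul' c p := by
    simp only [zsmul_eq_mul, eval_mul, eval_intCast, Int.cast_mul, Int.cast_id, eq_intCast,
      Finset.mul_sum, mul_left_comm]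

lemma exponentMoment_descPochhammer (g : R[X]) (k : ℕ) :
    exponentMoment g (descPochhammer ℤ k) = (derivative^[k] g).eval 1 := by
  conv_rhs => rw [g.as_sum_support_C_mul_X_pow]
  simp only [exponentMoment, LinearMap.coe_mk, AddHom.coe_mk, iterate_derivative_sum,
    iterate_derivative_C_mul, iterate_derivative_X_pow_eq_C_mul, eval_finsetSum, eval_mul, eval_C,
    eval_pow, eval_X, one_pow, mul_one, descPochhammer_eval_eq_descFactorial, Int.cast_natCast]

lemma exponentMoment_mul_eq_zero {g : R[X]} {N : ℤ[X]} (hN : ∀ e ∈ g.support, N.eval (e : ℤ) = 0)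
    (q : ℤ[X]) : exponentMoment g (N * q) = 0 :=
  Finset.sum_eq_zero fun e he ↦ by simp [hN e he]

/-- Reduce modulo the monic polynomial whose roots are the exponents of `g`, then expand in falling
factorials. -/
lemma exponentMoment_mem_span (g : R[X]) (p : ℤ[X]) :
    exponentMoment g p ∈ Submodule.span ℤ
      ((fun j ↦ (derivative^[j] g).eval 1) '' Set.Iio g.support.card) := by
  let N : ℤ[X] := Lagrange.nodal g.support ((↑) : ℕ → ℤ)
  have hN : N.Monic := Lagrange.nodal_monic
  have hNeval (e) (he : e ∈ g.support) : N.eval (e : ℤ) = 0 := Lagrange.eval_nodal_at_node he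
  let S : Polynomial.Sequence ℤ :=
    ⟨descPochhammer ℤ, fun i ↦ by
      rw [degree_eq_natDegree (monic_descPochhammer ℤ i).ne_zero, descPochhammer_natDegree]⟩
  have hS : Submodule.span ℤ (S '' Set.Iio g.support.card) = degreeLT ℤ g.support.card :=
    S.span_degreeLT fun i _ ↦ by
      rw [show (S i).leadingCoeff = 1 from monic_descPochhammer ℤ i]
      exact isUnit_one
  have hmod : exponentMoment g p = exponentMoment g (p %ₘ N) := by
    conv_lhs => rw [← modByMonic_add_div p N]
    rw [map_add, exponentMoment_mul_eq_zero hNeval, add_zero]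
  have hmem : p %ₘ N ∈ degreeLT ℤ g.support.card :=
    mem_degreeLT.mpr ((degree_modByMonic_lt p hN).trans_eq Lagrange.degree_nodal)
  rw [hmod]
  have := Submodule.mem_map_of_mem (f := exponentMoment g) (hS ▸ hmem)
  rw [Submodule.map_span, Set.image_image] at this
  simpa only [S, exponentMoment_descPochhammer] using this

lemma exists_eval_iterate_derivative_ne_zero [IsDomain R] [CharZero R] {g : R[X]} (hg : g ≠ 0) :
    ∃ j < g.support.card, (derivative^[j] g).eval 1 ≠ 0 := by
  by_contra! h
  obtain ⟨d, hd⟩ := nonempty_support_iff.mpr hg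
  let p : ℤ[X] := Lagrange.nodal (g.support.erase d) ((↑) : ℕ → ℤ)
  have hpd : p.eval (d : ℤ) ≠ 0 :=
    Lagrange.eval_nodal_not_at_node fun e he ↦
      Nat.cast_injective.ne (Finset.ne_of_mem_erase he).symm
  have hp_eq : exponentMoment g p = g.coeff d * (p.eval (d : ℤ) : ℤ) := by
    refine Finset.sum_eq_single_of_mem d hd fun e he hed ↦ ?_
    rw [Lagrange.eval_nodal_at_node (Finset.mem_erase.mpr ⟨hed, he⟩), Int.cast_zero, mul_zero]
  have hp_zero : exponentMoment g p = 0 := by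
    have hspan := exponentMoment_mem_span g p
    rwa [Submodule.span_eq_bot.mpr (by rintro _ ⟨j, hj, rfl⟩; exact h j hj),
      Submodule.mem_bot] at hspan
  exact mul_ne_zero (mem_support_iff.mp hd) (Int.cast_ne_zero.mpr hpd)
    (hp_eq ▸ hp_zero)

end SparseDerivatives

lemma norm_le_of_mem_span_int {E : Type*} [NormedCommRing E] [NormOneClass E] [IsUltrametricDist E]
    {s : Set E} {M : ℝ} (hM : 0 ≤ M) (hs : ∀ x ∈ s, ‖x‖ ≤ M) {x : E}
    (hx : x ∈ Submodule.span ℤ s) : ‖x‖ ≤ M := by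
  induction hx using Submodule.span_induction with
  | mem x hx => exact hs x hx
  | zero => simpa using hM
  | add x y _ _ hx hy => exact (IsUltrametricDist.norm_add_le_max x y).trans (max_le hx hy)
  | smul c x _ hx =>
    rw [zsmul_eq_mul]
    calc ‖(c : E) * x‖ ≤ ‖(c : E)‖ * ‖x‖ := norm_mul_le _ _
      _ ≤ ‖x‖ := mul_le_of_le_one_left (norm_nonneg x) (IsUltrametricDist.norm_intCast_le_one E c)
      _ ≤ M := hx

section SparseUnitBall

lemma coeff_taylor_one_comp {K : Type*} [Field K] [CharZero K] (g : K[X]) (ρ : K) (k : ℕ) :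
    ((taylor 1 g).comp (C ρ * X)).coeff k = ρ ^ k / k.factorial * (derivative^[k] g).eval 1 := by
  have hderiv : derivative^[k] g = k.factorial • hasseDeriv k g := by
    rw [← factorial_smul_hasseDeriv, LinearMap.smul_apply]
  rw [comp_C_mul_X_coeff, taylor_coeff, hderiv, eval_smul, nsmul_eq_mul, ← mul_assoc,
    div_mul_cancel₀ _ (Nat.cast_ne_zero.mpr k.factorial_ne_zero), mul_comm]

variable {K : Type*} [NormedField K] [IsUltrametricDist K] [CharZero K]

lemma exists_norm_eval_iterate_derivative_le {g : K[X]} (hg : g ≠ 0) :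
    ∃ j < g.support.card, (derivative^[j] g).eval 1 ≠ 0 ∧
      ∀ k, ‖(derivative^[k] g).eval 1‖ ≤ ‖(derivative^[j] g).eval 1‖ := by
  obtain ⟨i, hi, hne⟩ := exists_eval_iterate_derivative_ne_zero hg
  obtain ⟨j, hj, hmax⟩ := Finset.exists_max_image (Finset.range g.support.card)
    (fun j ↦ ‖(derivative^[j] g).eval 1‖) ⟨i, Finset.mem_range.mpr hi⟩
  refine ⟨j, Finset.mem_range.mp hj, fun h0 ↦ hne ?_, fun k ↦ ?_⟩
  · simpa [h0] using hmax i (Finset.mem_range.mpr hi)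
  · rw [← exponentMoment_descPochhammer g k]
    refine norm_le_of_mem_span_int (norm_nonneg _) ?_ (exponentMoment_mem_span g _)
    rintro _ ⟨i, hi, rfl⟩
    exact hmax i (Finset.mem_range.mpr hi)

theorem encard_sparse_roots_one_add_mul_le {g : K[X]} (hg : g ≠ 0) {ρ : K} {n : ℕ}
    (hn : g.support.card ≤ n + 1)
    (hρ : ∀ j ≤ n, ∀ k > n, ‖ρ ^ k / k.factorial‖ < ‖ρ ^ j / j.factorial‖) :
    {z : K | ‖z‖ ≤ 1 ∧ g.eval (1 + ρ * z) = 0}.encard ≤ n := by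
  obtain ⟨j, hj, hne, hmax⟩ := exists_norm_eval_iterate_derivative_le hg
  have heval (z : K) : ((taylor 1 g).comp (C ρ * X)).eval z = g.eval (1 + ρ * z) := by
    simp [taylor_eval, add_comm]
  simp only [← heval]
  refine encard_roots_closedBall_le (j := j) fun k hk ↦ ?_
  rw [coeff_taylor_one_comp, coeff_taylor_one_comp]
  rw [norm_mul (ρ ^ k / _), norm_mul (ρ ^ j / _)]
  exact mul_lt_mul_of_lt_of_le_of_nonneg_of_pos (hρ j (by omega) k hk) (hmax k) (norm_nonneg _)
    (norm_pos_iff.mpr hne)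

end SparseUnitBall

section TwoAdic

lemma norm_four_eq : ‖(4 : ℚ_[2])‖ = 2⁻¹ * 2⁻¹ := by
  rw [show (4 : ℚ_[2]) = (2 : ℕ) * (2 : ℕ) by norm_num, norm_mul, Padic.norm_p, Nat.cast_ofNat]

lemma norm_four_pow_div_factorial_lt {k : ℕ} (hk : k ≠ 0) :
    ‖(4 : ℚ_[2]) ^ k / k.factorial‖ < 2⁻¹ ^ k := by
  have hval : padicValNat 2 k.factorial < k := by
    simpa using sub_one_mul_padicValNat_factorial_lt_of_ne_zero 2 hk
  have hfact : (2 : ℝ)⁻¹ ^ k < ‖(k.factorial : ℚ_[2])‖ := by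
    rw [Padic.norm_eq_zpow_neg_valuation (Nat.cast_ne_zero.mpr k.factorial_ne_zero),
      Padic.valuation_natCast, Nat.cast_ofNat, zpow_neg, zpow_natCast, ← inv_pow]
    exact pow_lt_pow_right_of_lt_one₀ (by norm_num) (by norm_num) hval
  rw [norm_div, norm_pow, norm_four_eq, mul_pow,
    div_lt_iff₀ ((by positivity : (0 : ℝ) < _).trans hfact)]
  exact mul_lt_mul_of_pos_left hfact (by positivity)

lemma norm_four_pow_div_factorial_lt_of_lt {j k : ℕ} (hj : j ≤ 2) (hjk : j < k) :
    ‖(4 : ℚ_[2]) ^ k / k.factorial‖ < ‖(4 : ℚ_[2]) ^ j / j.factorial‖ := by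
  have htwo : ‖(2 : ℚ_[2])‖ = 2⁻¹ := Padic.norm_p (p := 2)
  calc ‖(4 : ℚ_[2]) ^ k / k.factorial‖ < 2⁻¹ ^ k := norm_four_pow_div_factorial_lt (by omega)
    _ ≤ 2⁻¹ ^ (j + 1) := pow_le_pow_of_le_one (by norm_num) (by norm_num) hjk
    _ ≤ ‖(4 : ℚ_[2]) ^ j / j.factorial‖ := by
      rw [norm_div, norm_pow, norm_four_eq]
      interval_cases j <;> norm_num [htwo, Nat.factorial]

lemma exists_eq_one_add_four_mul_or_neg {u : ℚ_[2]} (hu : ‖u‖ = 1) :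
    ∃ z : ℚ_[2], ‖z‖ ≤ 1 ∧ (u = 1 + 4 * z ∨ u = -(1 + 4 * z)) := by
  obtain ⟨u, rfl⟩ : ∃ v : ℤ_[2], (v : ℚ_[2]) = u := ⟨⟨u, hu.le⟩, rfl⟩
  have hdvd {x : ℤ_[2]} (hx : PadicInt.toZModPow 2 x = 0) :
      ∃ z : ℚ_[2], ‖z‖ ≤ 1 ∧ (x : ℚ_[2]) = 4 * z := by
    rw [← RingHom.mem_ker, PadicInt.ker_toZModPow, Ideal.mem_span_singleton] at hx
    obtain ⟨z, rfl⟩ := hx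
    exact ⟨z, z.2, by rw [PadicInt.coe_mul, PadicInt.coe_pow, PadicInt.coe_natCast]; norm_num⟩
  have hunit : IsUnit (PadicInt.toZModPow 2 u) := (PadicInt.isUnit_iff.mpr hu).map _
  have hcases : ∀ v : ZMod (2 ^ 2), IsUnit v → v = 1 ∨ v = -1 := by decide
  rcases hcases _ hunit with h | h
  · obtain ⟨z, hz, hu1⟩ := hdvd (x := u - 1) (by rw [map_sub, h, map_one, sub_self])
    rw [PadicInt.coe_sub, PadicInt.coe_one] at hu1
    exact ⟨z, hz, .inl (eq_add_of_sub_eq' hu1)⟩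
  · obtain ⟨z, hz, hu1⟩ := hdvd (x := -u - 1)
      (by rw [map_sub, map_neg, h, map_one, neg_neg, sub_self])
    rw [PadicInt.coe_sub, PadicInt.coe_neg, PadicInt.coe_one] at hu1
    exact ⟨z, hz, .inr (neg_eq_iff_eq_neg.mp (eq_add_of_sub_eq' hu1))⟩

lemma encard_sparse_roots_mul_one_add_four_mul_le {g : ℚ_[2][X]} (hg : g ≠ 0) {n : ℕ} (hn : n ≤ 2)
    (hcard : g.support.card ≤ n + 1) {s : ℚ_[2]} (hs : s ≠ 0) :
    {t | g.eval t = 0 ∧ ∃ z, ‖z‖ ≤ 1 ∧ t = s * (1 + 4 * z)}.encard ≤ n := by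
  have hsupp : (g.comp (C s * X)).support = g.support := by
    ext i
    simp [comp_C_mul_X_coeff, hs]
  have hbound := encard_sparse_roots_one_add_mul_le (g := g.comp (C s * X)) (ρ := 4) (n := n)
    (support_nonempty.mp (hsupp ▸ support_nonempty.mpr hg)) (hsupp ▸ hcard)
    fun j hj k hk ↦ norm_four_pow_div_factorial_lt_of_lt (hj.trans hn) (hj.trans_lt hk)
  refine le_trans ?_ ((Set.encard_image_le (fun z ↦ s * (1 + 4 * z)) _).trans hbound)
  refine Set.encard_le_encard ?_
  rintro _ ⟨hroot, z, hz, rfl⟩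
  exact ⟨z, ⟨hz, by simpa using hroot⟩, rfl⟩

lemma encard_sparse_roots_sphere_le {g : ℚ_[2][X]} (hg : g ≠ 0) {n : ℕ} (hn : n ≤ 2)
    (hcard : g.support.card ≤ n + 1) {s : ℚ_[2]} (hs : s ≠ 0) :
    {t | g.eval t = 0 ∧ ‖t‖ = ‖s‖}.encard ≤ 2 * n := by
  rw [two_mul]
  refine le_trans (le_trans (Set.encard_le_encard ?_) (Set.encard_union_le _ _)) (add_le_add
    (encard_sparse_roots_mul_one_add_four_mul_le hg hn hcard hs)
    (encard_sparse_roots_mul_one_add_four_mul_le hg hn hcard (neg_ne_zero.mpr hs)))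
  rintro t ⟨hroot, ht⟩
  have hu : ‖t / s‖ = 1 := by rw [norm_div, ht, div_self (norm_ne_zero_iff.mpr hs)]
  obtain ⟨z, hz, h | h⟩ := exists_eq_one_add_four_mul_or_neg hu
  · exact .inl ⟨hroot, z, hz, by rw [← h, mul_div_cancel₀ _ hs]⟩
  · exact .inr ⟨hroot, z, hz, by rw [neg_mul_comm, ← h, mul_div_cancel₀ _ hs]⟩

end TwoAdic

section Ties

variable {K : Type*} [NormedField K]

lemma exists_norm_eq_of_sum_eq_zero [IsUltrametricDist K] {ι : Type*} {s : Finset ι} {f : ι → K}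
    (hne : ∃ i ∈ s, f i ≠ 0) (hsum : ∑ i ∈ s, f i = 0) :
    ∃ i ∈ s, ∃ j ∈ s, i ≠ j ∧ ‖f i‖ = ‖f j‖ := by
  by_contra! h
  obtain ⟨i, hi, hfi⟩ := hne
  have hsup := IsUltrametricDist.nnnorm_sum_eq_sup_of_pairwise_ne (s := s) (f := f)
    fun i hi j hj hij heq ↦ h i hi j hj hij (congrArg NNReal.toReal heq)
  rw [hsum, nnnorm_zero] at hsup
  exact hfi (nnnorm_eq_zero.mp (le_zero_iff.mp ((Finset.le_sup hi).trans_eq hsup.symm)))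

lemma norm_eq_of_norm_mul_pow_eq {a b s t : K} {i j : ℕ} (hij : i ≠ j) (ha : a ≠ 0) (hs : s ≠ 0)
    (ht : t ≠ 0) (hts : ‖a * t ^ i‖ = ‖b * t ^ j‖) (hss : ‖a * s ^ i‖ = ‖b * s ^ j‖) :
    ‖t‖ = ‖s‖ := by
  have hs' : 0 < ‖s‖ := norm_pos_iff.mpr hs
  have ht' : 0 < ‖t‖ := norm_pos_iff.mpr ht
  have ha' : 0 < ‖a‖ := norm_pos_iff.mpr ha
  rw [norm_mul, norm_mul, norm_pow, norm_pow] at hts hss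
  have hpow : (‖t‖ / ‖s‖) ^ i = (‖t‖ / ‖s‖) ^ j := by
    have hb : ‖b‖ * ‖s‖ ^ j ≠ 0 := hss ▸ by positivity
    rw [div_pow, div_pow, ← mul_div_mul_left _ (‖s‖ ^ i) ha'.ne',
      ← mul_div_mul_left _ (‖s‖ ^ j) (left_ne_zero_of_mul hb), hts, hss]
  by_contra hne
  exact hij (pow_right_injective₀ (div_pos ht' hs') (by rwa [Ne, div_eq_one_iff_eq hs'.ne']) hpow)

end Ties

section TwoAdicRootCount

lemma encard_sparse_roots_tied_le {g : ℚ_[2][X]} {n : ℕ} (hn : n ≤ 2)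
    (hcard : g.support.card ≤ n + 1) {i j : ℕ} (hi : g.coeff i ≠ 0) (hij : i ≠ j) :
    {t | t ≠ 0 ∧ g.eval t = 0 ∧ ‖g.coeff i * t ^ i‖ = ‖g.coeff j * t ^ j‖}.encard ≤ 2 * n := by
  obtain hempty | ⟨s, hs, -, hss⟩ := Set.eq_empty_or_nonempty
    {t | t ≠ 0 ∧ g.eval t = 0 ∧ ‖g.coeff i * t ^ i‖ = ‖g.coeff j * t ^ j‖}
  · rw [hempty, Set.encard_empty]
    exact zero_le
  · refine le_trans (Set.encard_le_encard fun t ⟨ht, hroot, hts⟩ ↦ ?_)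
      (encard_sparse_roots_sphere_le (ne_of_apply_ne (coeff · i) hi) hn hcard hs)
    exact ⟨hroot, norm_eq_of_norm_mul_pow_eq hij hi hs ht hts hss⟩

theorem encard_sparse_roots_ne_zero_le {g : ℚ_[2][X]} (hg : g ≠ 0) {n : ℕ} (hn : n ≤ 2)
    (hcard : g.support.card ≤ n + 1) :
    {t | t ≠ 0 ∧ g.eval t = 0}.encard ≤ ((n + 1).choose 2 * (2 * n) : ℕ) := by
  let tied (q : Finset ℕ) : Set ℚ_[2] := {t | t ≠ 0 ∧ g.eval t = 0 ∧
    ∀ i ∈ q, ∀ j ∈ q, ‖g.coeff i * t ^ i‖ = ‖g.coeff j * t ^ j‖}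
  have htied (q) (hq : q ∈ g.support.powersetCard 2) : (tied q).encard ≤ (2 * n : ℕ) := by
    obtain ⟨hsub, hq2⟩ := Finset.mem_powersetCard.mp hq
    obtain ⟨i, j, hij, rfl⟩ := Finset.card_eq_two.mp hq2
    have hi : g.coeff i ≠ 0 := mem_support_iff.mp (hsub (Finset.mem_insert_self i {j}))
    refine le_trans (Set.encard_le_encard ?_) (encard_sparse_roots_tied_le hn hcard hi hij)
    exact fun t ⟨ht, hroot, h⟩ ↦ ⟨ht, hroot, h i (by simp) j (by simp)⟩
  have hcover : {t | t ≠ 0 ∧ g.eval t = 0} ⊆ ⋃ q ∈ g.support.powersetCard 2, tied q := by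
    rintro t ⟨ht, hroot⟩
    obtain ⟨d, hd⟩ := support_nonempty.mpr hg
    obtain ⟨i, hi, j, hj, hij, heq⟩ := exists_norm_eq_of_sum_eq_zero
      (s := g.support) (f := fun i ↦ g.coeff i * t ^ i)
      ⟨d, hd, mul_ne_zero (mem_support_iff.mp hd) (pow_ne_zero d ht)⟩
      (eval_eq_sum.symm.trans hroot)
    refine Set.mem_biUnion (x := {i, j}) (Finset.mem_powersetCard.mpr ⟨?_, ?_⟩) ⟨ht, hroot, ?_⟩
    · exact Finset.insert_subset hi (Finset.singleton_subset_iff.mpr hj)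
    · exact Finset.card_pair hij
    · simp only [Finset.mem_insert, Finset.mem_singleton, forall_eq_or_imp, forall_eq, heq,
        and_self]
  have hpairs : (g.support.powersetCard 2 : Set (Finset ℕ)).encard ≤ (n + 1).choose 2 := by
    rw [Set.encard_coe_eq_coe_finsetCard, Finset.card_powersetCard]
    exact_mod_cast Nat.choose_le_choose 2 hcard
  exact (Set.encard_le_encard hcover).trans (encard_biUnion_le_mul hpairs htied)

end TwoAdicRootCount

/-- Every nonzero polynomial over `K` with at most `n` terms has at most `N` nonzero roots in `K`,
the roots being counted in the multiplicative group. -/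
def SparseRootBound (K : Type*) [Field K] (n N : ℕ) : Prop :=
  ∀ g : K[X], g ≠ 0 → g.support.card ≤ n → {t : Kˣ | g.eval (t : K) = 0}.encard ≤ N

lemma zpow_mul_zpow_of_bezout {G : Type*} [CommGroup G] {x y z : G} {A B u v : ℤ}
    (huv : u * A + v * B = 1) (hz : x ^ A * y ^ B = z) :
    z ^ u * (x ^ v * y ^ (-u)) ^ B = x ∧ z ^ v * (x ^ v * y ^ (-u)) ^ (-A) = y := by
  subst hz
  rw [mul_zpow _ _ u, mul_zpow _ _ v, mul_zpow _ _ B, mul_zpow _ _ (-A), mul_mul_mul_comm,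
    mul_mul_mul_comm (_ ^ v)]
  simp only [← zpow_mul, ← zpow_add]
  constructor
  · rw [show A * u + v * B = 1 by linarith, show B * u + -u * B = 0 by ring, zpow_one, zpow_zero,
      mul_one]
  · rw [show A * v + v * -A = 0 by ring, show B * v + -u * -A = 1 by linarith, zpow_zero, zpow_one,
      one_mul]

lemma exists_eval_eq_zero_of_eval_prod_pow {K ι : Type*} [Field K] {c : K} {s : Finset ι}
    {F : ι → K[X]} {m : ι → ℕ} (hne : C c * ∏ i ∈ s, F i ^ m i ≠ 0) {x : K}
    (hx : (C c * ∏ i ∈ s, F i ^ m i).eval x = 0) : ∃ i ∈ s, F i ≠ 0 ∧ (F i).eval x = 0 := by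
  have hc : c ≠ 0 := C_ne_zero.mp (left_ne_zero_of_mul hne)
  rw [eval_C_mul, mul_eq_zero_iff_left hc, eval_prod, Finset.prod_eq_zero_iff] at hx
  obtain ⟨i, hi, hx⟩ := hx
  have hpow : F i ^ m i ≠ 0 := Finset.prod_ne_zero_iff.mp (right_ne_zero_of_mul hne) i hi
  rw [eval_pow, pow_eq_zero_iff'] at hx
  exact ⟨i, hi, (pow_ne_zero_iff hx.2).mp hpow, hx.1⟩

namespace SparseRootBound

variable {K : Type*} [Field K] {r N : ℕ}

lemma pos {n : ℕ} (h : SparseRootBound K n N) (hn : 2 ≤ n) : 0 < N := by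
  have hcard : (X - C (1 : K)).support.card ≤ n :=
    (card_supp_le_succ_natDegree _).trans (by rwa [natDegree_X_sub_C])
  have hmem : (1 : Kˣ) ∈ {t : Kˣ | (X - C (1 : K)).eval (t : K) = 0} := by simp
  exact_mod_cast (Set.encard_pos.mpr ⟨1, hmem⟩).trans_le (h _ (X_sub_C_ne_zero 1) hcard)

lemma encard_binomial_le (h : SparseRootBound K 2 r) {c d : K} {i j : ℕ}
    (hne : C c * X ^ i + C d * X ^ j ≠ 0) :
    {t : Kˣ | c * (t : K) ^ i + d * (t : K) ^ j = 0}.encard ≤ r := by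
  simpa using h _ hne ((Finset.card_le_card (support_binomial_subset i j c d)).trans
    Finset.card_le_two)

lemma encard_zpow_eq_le (h : SparseRootBound K 2 r) {k : ℤ} (hk : k ≠ 0) (γ : Kˣ) :
    {t : Kˣ | t ^ k = γ}.encard ≤ r := by
  have hnat {n : ℕ} (hn : n ≠ 0) (δ : Kˣ) : {t : Kˣ | t ^ n = δ}.encard ≤ r := by
    have hne : C (1 : K) * X ^ n + C (-δ : K) * X ^ 0 ≠ 0 := fun h0 ↦ by
      have hcoeff := congrArg (coeff · n) h0
      simp only [coeff_add, coeff_C_mul, coeff_X_pow, coeff_zero] at hcoeff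
      simp [hn] at hcoeff
    simpa [← sub_eq_add_neg, sub_eq_zero, Units.ext_iff] using h.encard_binomial_le hne
  obtain ⟨n, rfl | rfl⟩ := k.eq_nat_or_neg
  · simpa only [zpow_natCast] using hnat (by simpa using hk) γ
  · simpa only [zpow_neg, zpow_natCast, inv_eq_iff_eq_inv] using hnat (by simpa using hk) γ⁻¹

lemma encard_laurent_trinomial_le (h : SparseRootBound K 3 N) {a b c : K} (ha : a ≠ 0)
    (hb : b ≠ 0) {i j : ℤ} (hij : i ≠ j) (k : ℤ) :
    {t : Kˣ | a * (t ^ i : Kˣ) + b * (t ^ j : Kˣ) + c * (t ^ k : Kˣ) = 0}.encard ≤ N := by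
  obtain ⟨l, i, j, k, rfl, rfl, rfl⟩ :
      ∃ (l : ℤ) (i' j' k' : ℕ), i = l + i' ∧ j = l + j' ∧ k = l + k' :=
    let l := min i (min j k)
    ⟨l, (i - l).toNat, (j - l).toNat, (k - l).toNat, by omega, by omega, by omega⟩
  have hij : i ≠ j := by rintro rfl; exact hij rfl
  have hne : C a * X ^ i + C b * X ^ j + C c * X ^ k ≠ 0 := fun h0 ↦ by
    have hcoeff (e : ℕ) := congrArg (coeff · e) h0
    simp only [coeff_add, coeff_C_mul, coeff_X_pow, coeff_zero] at hcoeff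
    obtain rfl | hik := eq_or_ne i k
    · simpa [hij.symm, hb] using hcoeff j
    · simpa [hij, hik, ha] using hcoeff i
  refine le_trans (Set.encard_le_encard fun t ht ↦ ?_) (h _ hne
    ((Finset.card_le_card (support_trinomial_subset i j k a b c)).trans Finset.card_le_three))
  have hfactor : ((t ^ l : Kˣ) : K) * (a * t ^ i + b * t ^ j + c * t ^ k) = 0 := by
    simp only [Set.mem_ofPred_eq, zpow_add, zpow_natCast, Units.val_mul, Units.val_pow_eq_pow_val]
      at ht
    linear_combination ht
  simpa using (mul_eq_zero.mp hfactor).resolve_left (Units.ne_zero _)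

/-- A Bézout relation parametrizes the curve `x ^ A * y ^ B = z` by a single unit `t`, in terms of
which `y = c x ^ m + d x ^ m'` is a trinomial equation. -/
lemma encard_curve_le_of_isCoprime (h : SparseRootBound K 3 N) {c d : K} (hc : c ≠ 0) (hd : d ≠ 0)
    {m m' : ℕ} (hm : m ≠ m') {A B : ℤ} (hB : B ≠ 0) (hAB : IsCoprime A B) (z : Kˣ) :
    {x : Kˣ | ∃ y : Kˣ, (y : K) = c * x ^ m + d * x ^ m' ∧ x ^ A * y ^ B = z}.encard ≤ N := by
  obtain ⟨u, v, huv⟩ := hAB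
  have hBm : B * m ≠ B * m' := (mul_right_injective₀ hB).ne (Nat.cast_injective.ne hm)
  refine le_trans
    (le_trans (Set.encard_le_encard ?_) (Set.encard_image_le (fun t ↦ z ^ u * t ^ B) _))
    (h.encard_laurent_trinomial_le (a := c * (z ^ u : Kˣ) ^ m) (b := d * (z ^ u : Kˣ) ^ m')
      (c := -(z ^ v : Kˣ)) (mul_ne_zero hc (pow_ne_zero _ (Units.ne_zero _)))
      (mul_ne_zero hd (pow_ne_zero _ (Units.ne_zero _))) hBm (-A))
  rintro x ⟨y, hy, hxy⟩
  obtain ⟨hx, hy'⟩ := zpow_mul_zpow_of_bezout huv hxy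
  set t := x ^ v * y ^ (-u)
  refine ⟨t, ?_, hx⟩
  rw [← hx, ← hy'] at hy
  simp only [Units.val_mul, mul_pow] at hy
  simp only [Set.mem_ofPred_eq, zpow_mul, zpow_natCast, Units.val_pow_eq_pow_val]
  linear_combination -hy

lemma encard_curve_le (h₂ : SparseRootBound K 2 r) (h₃ : SparseRootBound K 3 N) {c d : K}
    (hc : c ≠ 0) (hd : d ≠ 0) {m m' : ℕ} (hm : m ≠ m') (A : ℤ) {B : ℤ} (hB : B ≠ 0) (γ : Kˣ) :
    {x : Kˣ | ∃ y : Kˣ, (y : K) = c * x ^ m + d * x ^ m' ∧ x ^ A * y ^ B = γ}.encard ≤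
      (r * N : ℕ) := by
  have hgcd : 0 < A.gcd B := Int.gcd_pos_of_ne_zero_right A hB
  obtain ⟨A', B', hcop, hA, hB'⟩ := Int.exists_gcd_one hgcd
  set k := A.gcd B
  have hB'0 : B' ≠ 0 := by rintro rfl; exact hB (by rw [hB', zero_mul])
  refine le_trans (Set.encard_le_encard ?_) (encard_biUnion_le_mul
    (h₂.encard_zpow_eq_le (k := k) (by exact_mod_cast hgcd.ne') γ)
    fun z _ ↦ h₃.encard_curve_le_of_isCoprime hc hd hm hB'0
      (Int.isCoprime_iff_gcd_eq_one.mpr hcop) z)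
  rintro x ⟨y, hy, hxy⟩
  refine Set.mem_biUnion (x := x ^ A' * y ^ B') ?_ ⟨y, hy, rfl⟩
  rw [Set.mem_ofPred_eq, mul_zpow, ← zpow_mul, ← zpow_mul, ← hA, ← hB', hxy]

lemma encard_binomial_mul_pow_le (h : SparseRootBound K 2 r) {P Q : K[X]} (hQ : Q ≠ 0) {c d : K}
    {a a' b : ℕ} (hQP : Q = (C c * X ^ a + C d * X ^ a') * P ^ b) :
    {x : Kˣ | P.eval (x : K) ≠ 0 ∧ Q.eval (x : K) = 0}.encard ≤ r := by
  subst hQP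
  refine le_trans (Set.encard_le_encard ?_) (h.encard_binomial_le (left_ne_zero_of_mul hQ))
  rintro x ⟨hP, hroot⟩
  simpa [hP] using hroot

lemma encard_tower_le_of_monomial (h : SparseRootBound K 2 r) {Q : K[X]} (hQ : Q ≠ 0) {κ c d : K}
    {e a a' b b' : ℕ}
    (hQP : Q = C c * (X ^ a * (C κ * X ^ e) ^ b) + C d * (X ^ a' * (C κ * X ^ e) ^ b')) :
    {x : Kˣ | Q.eval (x : K) = 0}.encard ≤ r := by
  have hbinomial : Q = C (c * κ ^ b) * X ^ (a + e * b) + C (d * κ ^ b') * X ^ (a' + e * b') := by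
    rw [hQP]
    simp only [C_mul, C_pow]
    ring
  simpa [hbinomial] using h.encard_binomial_le (hbinomial ▸ hQ)

lemma encard_tower_le (h₂ : SparseRootBound K 2 r) (h₃ : SparseRootBound K 3 N) {P Q : K[X]}
    {c₁ d₁ c d : K} {m m' a a' b b' : ℕ} (hP : P = C c₁ * X ^ m + C d₁ * X ^ m')
    (hQP : Q = C c * (X ^ a * P ^ b) + C d * (X ^ a' * P ^ b')) :
    {x : Kˣ | (P ≠ 0 → P.eval (x : K) ≠ 0) ∧ Q ≠ 0 ∧ Q.eval (x : K) = 0}.encard ≤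
      (r * N : ℕ) := by
  obtain hQ | hQ := eq_or_ne Q 0
  · simp [hQ]
  have hr : (r : ℕ∞) ≤ (r * N : ℕ) := by
    exact_mod_cast Nat.le_mul_of_pos_right r (h₃.pos (by norm_num))
  by_cases hmon : ∃ κ e, P = C κ * X ^ e
  · obtain ⟨κ, e, rfl⟩ := hmon
    refine le_trans (Set.encard_le_encard ?_) ((h₂.encard_tower_le_of_monomial hQ hQP).trans hr)
    exact fun x hx ↦ hx.2.2
  have hP0 : P ≠ 0 := fun h0 ↦ hmon ⟨0, 0, by simp [h0]⟩
  simp only [ne_eq, hP0, hQ, not_false_eq_true, true_imp_iff, true_and]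
  by_cases hfac : ∃ c d a a' b, Q = (C c * X ^ a + C d * X ^ a') * P ^ b
  · obtain ⟨c, d, a, a', b, hfac⟩ := hfac
    exact (h₂.encard_binomial_mul_pow_le hQ hfac).trans hr
  have hc₁ : c₁ ≠ 0 := by rintro rfl; exact hmon ⟨d₁, m', by simp [hP]⟩
  have hd₁ : d₁ ≠ 0 := by rintro rfl; exact hmon ⟨c₁, m, by simp [hP]⟩
  have hm : m ≠ m' := by rintro rfl; exact hmon ⟨c₁ + d₁, m, by rw [hP, C_add, add_mul]⟩
  have hc : c ≠ 0 := by rintro rfl; exact hfac ⟨0, d, a', a', b', by simp [hQP, mul_assoc]⟩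
  have hd : d ≠ 0 := by rintro rfl; exact hfac ⟨c, 0, a, a, b, by simp [hQP, mul_assoc]⟩
  have hb : b ≠ b' := by rintro rfl; exact hfac ⟨c, d, a, a', b, by rw [hQP]; ring⟩
  refine le_trans (Set.encard_le_encard ?_) (encard_curve_le h₂ h₃ hc₁ hd₁ hm (a - a' : ℤ)
    (B := b - b') (sub_ne_zero.mpr (Nat.cast_injective.ne hb))
    (Units.mk0 (-d / c) (div_ne_zero (neg_ne_zero.mpr hd) hc)))
  rintro x ⟨hPx, hQx⟩
  refine ⟨Units.mk0 (P.eval (x : K)) hPx, by simp [hP], ?_⟩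
  rw [hQP] at hQx
  simp only [eval_add, eval_mul, eval_C, eval_pow, eval_X] at hQx
  ext
  simp only [zpow_sub, zpow_natCast, Units.val_mul, Units.val_inv_eq_inv_val,
    Units.val_pow_eq_pow_val, Units.val_mk0]
  have hx : (x : K) ≠ 0 := x.ne_zero
  field_simp
  linear_combination hQx

lemma encard_units_roots_le (h₂ : SparseRootBound K 2 r) (h₃ : SparseRootBound K 3 N) {f : K[X]}
    (hf : f ≠ 0) (hpres : HasAddComplexityPres f 2) :
    {x : Kˣ | f.eval (x : K) = 0}.encard ≤ (r + r * N : ℕ) := by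
  obtain ⟨c, d, m, m', Xs, hX, hstep, hfin⟩ := hpres
  have hP := hstep 1 le_rfl one_le_two
  have hQ := hstep 2 one_le_two le_rfl
  simp only [Finset.prod_range_succ, Finset.prod_range_zero, one_mul, hX] at hP hQ
  let S₁ : Set Kˣ := {x | Xs 1 ≠ 0 ∧ (Xs 1).eval (x : K) = 0}
  let S₂ : Set Kˣ :=
    {x | (Xs 1 ≠ 0 → (Xs 1).eval (x : K) ≠ 0) ∧ Xs 2 ≠ 0 ∧ (Xs 2).eval (x : K) = 0}
  have hS₁ : S₁.encard ≤ r := by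
    obtain h0 | h0 := eq_or_ne (Xs 1) 0
    · simp [S₁, h0]
    · refine le_trans (Set.encard_le_encard fun x hx ↦ ?_) (h₂.encard_binomial_le (hP ▸ h0))
      simpa [hP] using hx.2
  have hcover : {x : Kˣ | f.eval (x : K) = 0} ⊆ S₁ ∪ S₂ := by
    intro x hx
    obtain ⟨i, hi, hne, hroot⟩ := exists_eval_eq_zero_of_eval_prod_pow (hfin ▸ hf) (hfin ▸ hx)
    have hi : i = 0 ∨ i = 1 ∨ i = 2 := by have := Finset.mem_range.mp hi; omega
    by_cases hx₁ : x ∈ S₁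
    · exact .inl hx₁
    obtain rfl | rfl | rfl := hi
    · simp [hX] at hroot
    · exact absurd ⟨hne, hroot⟩ hx₁
    · exact .inr ⟨fun hP₀ h ↦ hx₁ ⟨hP₀, h⟩, hne, hroot⟩
  calc {x : Kˣ | f.eval (x : K) = 0}.encard ≤ (S₁ ∪ S₂).encard := Set.encard_le_encard hcover
    _ ≤ S₁.encard + S₂.encard := Set.encard_union_le S₁ S₂
    _ ≤ (r + r * N : ℕ) := by
      rw [Nat.cast_add]
      exact add_le_add hS₁ (encard_tower_le h₂ h₃ hP hQ)

end SparseRootBound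

lemma encard_roots_le_one_add {K : Type*} [Field K] (f : K[X]) :
    {x : K | f.eval x = 0}.encard ≤ 1 + {x : Kˣ | f.eval (x : K) = 0}.encard := by
  calc {x : K | f.eval x = 0}.encard
      ≤ ({0} ∪ Units.val '' {x : Kˣ | f.eval (x : K) = 0}).encard := by
        refine Set.encard_le_encard fun x hx ↦ ?_
        obtain rfl | hx0 := eq_or_ne x 0
        · exact .inl rfl
        · exact .inr ⟨Units.mk0 x hx0, hx, rfl⟩
    _ ≤ 1 + {x : Kˣ | f.eval (x : K) = 0}.encard := by
      refine (Set.encard_union_le _ _).trans (add_le_add (Set.encard_singleton _).le ?_)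
      exact Set.encard_image_le _ _

section Existence

variable {L : Type*} [Field L] {f : L[X]} {s : ℕ}

lemma hasAddComplexityPres_C (a : L) : HasAddComplexityPres (C a) 0 :=
  ⟨fun _ ↦ a, 0, 0, 0, fun _ ↦ X, rfl, fun _ _ _ ↦ by omega, by simp⟩

lemma HasAddComplexityPres.X_pow_mul_add_C (h : HasAddComplexityPres f s) (k : ℕ) (a : L) :
    HasAddComplexityPres (X ^ k * f + C a) (s + 1) := by
  obtain ⟨c, d, m, m', Xs, hX, hstep, hf⟩ := h
  let Ys : ℕ → L[X] := Function.update Xs (s + 1) (X ^ k * f + C a)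
  let n (i : ℕ) : ℕ → ℕ := Function.update
    (Function.update (m i) (s + 1) (m i (s + 1) + if i = 0 then k else 0))
    (s + 2) (if i = s + 1 then 1 else 0)
  let n' (i : ℕ) : ℕ → ℕ := Function.update (m' i) (s + 1) 0
  have hYs {i : ℕ} (hi : i < s + 1) : Ys i = Xs i := Function.update_of_ne hi.ne _ _
  refine ⟨Function.update c (s + 2) 1, Function.update d (s + 1) a, n, n', Ys, ?_, ?_, ?_⟩
  · rw [hYs s.succ_pos, hX]
  · intro j hj hjs
    have hprod (e : ℕ → ℕ → ℕ) :
        ∏ i ∈ Finset.range j, Ys i ^ e i j = ∏ i ∈ Finset.range j, Xs i ^ e i j :=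
      Finset.prod_congr rfl fun i hi ↦ by rw [hYs ((Finset.mem_range.mp hi).trans_le hjs)]
    rw [hprod, hprod, Function.update_of_ne (by omega)]
    obtain hjs | rfl := hjs.lt_or_eq
    · have hn (i) : n i j = m i j := by simp [n, show j ≠ s + 1 by omega, show j ≠ s + 2 by omega]
      have hn' (i) : n' i j = m' i j := by simp [n', show j ≠ s + 1 by omega]
      rw [hYs hjs, hstep j hj (by omega), Function.update_of_ne (by omega)]
      simp only [hn, hn']
    · have hn (i) : n i (s + 1) = m i (s + 1) + if i = 0 then k else 0 := by simp [n]
      have hn' (i) : n' i (s + 1) = 0 := by simp [n']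
      have hshift : ∏ i ∈ Finset.range (s + 1), Xs i ^ (if i = 0 then k else 0) = X ^ k := by
        rw [Finset.prod_eq_single_of_mem 0 (by simp) (by simp +contextual), if_pos rfl, hX]
      simp only [hn, hn', Ys, Function.update_self, pow_add, Finset.prod_mul_distrib, hshift,
        pow_zero, Finset.prod_const_one, mul_one]
      rw [hf]
      ring
  · have hn (i) : n i (s + 2) = if i = s + 1 then 1 else 0 := by simp [n]
    rw [Finset.prod_eq_single_of_mem (s + 1) (by simp) (by simp +contextual [hn])]
    simp [hn, Ys]

lemma HasAddComplexityPres.mono (h : HasAddComplexityPres f s) {t : ℕ} (hst : s ≤ t) :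
    HasAddComplexityPres f t := by
  induction t, hst using Nat.le_induction with
  | base => exact h
  | succ t _ ih => simpa using ih.X_pow_mul_add_C 0 0

lemma exists_hasAddComplexityPres (f : L[X]) : ∃ s, HasAddComplexityPres f s := by
  induction f using recOnHorner with
  | M0 => exact ⟨0, by simpa using hasAddComplexityPres_C (0 : L)⟩
  | MC p a _ _ ih =>
    obtain ⟨s, hs⟩ := ih
    exact ⟨s + 1, by simpa using hs.X_pow_mul_add_C 0 a⟩
  | MX p _ ih =>
    obtain ⟨s, hs⟩ := ih
    exact ⟨s + 1, by simpa [mul_comm] using hs.X_pow_mul_add_C 1 0⟩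

lemma hasAddComplexityPres_addComplexity (f : L[X]) : HasAddComplexityPres f (addComplexity f) :=
  Nat.sInf_mem (exists_hasAddComplexityPres f)

end Existence

lemma sparseRootBound_two_adic {n : ℕ} (hn : n ≤ 2) :
    SparseRootBound ℚ_[2] (n + 1) ((n + 1).choose 2 * (2 * n)) := by
  intro g hg hcard
  rw [← Units.val_injective.encard_image]
  refine le_trans (Set.encard_le_encard ?_) (encard_sparse_roots_ne_zero_le hg hn hcard)
  rintro _ ⟨t, ht, rfl⟩
  exact ⟨t.ne_zero, ht⟩

theorem twoadic_root_count_sigma_le_two_general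
    (f : Polynomial ℚ_[2]) (hf : f ≠ 0) (hσ : addComplexity f ≤ 2) :
    {x : ℚ_[2] | f.eval x = 0}.encard ≤ 27 := by
  have hpres : HasAddComplexityPres f 2 := (hasAddComplexityPres_addComplexity f).mono hσ
  have hbinomial : SparseRootBound ℚ_[2] 2 2 := sparseRootBound_two_adic one_le_two
  have htrinomial : SparseRootBound ℚ_[2] 3 12 := sparseRootBound_two_adic le_rfl
  calc {x : ℚ_[2] | f.eval x = 0}.encard
      ≤ 1 + {x : ℚ_[2]ˣ | f.eval (x : ℚ_[2]) = 0}.encard := encard_roots_le_one_add f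
    _ ≤ 1 + (2 + 2 * 12 : ℕ) := by
      gcongr
      exact hbinomial.encard_units_roots_le htrinomial hf hpres
    _ = 27 := by norm_num

theorem twoadic_root_count_sigma_le_two
    (f : Polynomial ℚ_[2]) (hf : f ≠ 0) (hσ : addComplexity f ≤ 2) :
    {x : ℚ_[2] | f.eval x = 0}.ncard ≤ 35 := by
  rw [Set.ncard_def]
  exact ENat.toNat_le_of_le_natCast
    ((twoadic_root_count_sigma_le_two_general f hf hσ).trans (by norm_num))
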